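/- Let n be a positive integer and let F be a field that is an algebraic extension of a prime field, whose characteristic is 0 or an odd rational prime p with gcd(n,p) = 1. Then every derivation of the group algebra F V_{8n} is F-linear, and the F-vector space Der(F V_{8n}) of all derivations of F V_{8n} has dimension 6(n−1) over F if n is even, and dimension 3(2n−1) over F if n is odd. -/

import Mathlib

/-- The relators of the presentation
`V_{8n} = ⟨a, b ∣ a^{2n} = b⁴ = 1, (ba)² = 1, (b⁻¹a)² = 1⟩`,
where `a` is the generator indexed by `0` and `b` the one indexed by `1`.
(The relations `ba = a⁻¹b⁻¹` and `b⁻¹a = a⁻¹b` are equivalent to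
`(ba)² = 1` and `(b⁻¹a)² = 1` respectively.) -/
def V8nRels (n : ℕ) : Set (FreeGroup (Fin 2)) :=
  {(FreeGroup.of 0) ^ (2 * n), (FreeGroup.of 1) ^ 4,
   (FreeGroup.of 1 * FreeGroup.of 0) ^ 2,
   ((FreeGroup.of 1)⁻¹ * FreeGroup.of 0) ^ 2}

/-- The group `V_{8n}` of order `8n`. -/
abbrev V8n (n : ℕ) : Type := PresentedGroup (V8nRels n)

/-- The generator `a` of `V_{8n}`. -/
def aV (n : ℕ) : V8n n := PresentedGroup.of 0

/-- The generator `b` of `V_{8n}`. -/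
def bV (n : ℕ) : V8n n := PresentedGroup.of 1
/-- The `F`-vector space of `F`-derivations of an `F`-algebra `A`,
realized as the `F`-linear endomorphisms of `A` satisfying the Leibniz rule. -/
def fDerivations (F : Type*) [CommSemiring F] (A : Type*) [Ring A] [Algebra F A] :
    Submodule F (A →ₗ[F] A) where
  carrier := {d | ∀ x y : A, d (x * y) = d x * y + x * d y}
  zero_mem' := by intro x y; simp
  add_mem' := by
    intro d e hd he x y
    simp only [LinearMap.add_apply, hd x y, he x y, add_mul, mul_add]
    abel
  smul_mem' := by
    intro c d hd x y
    simp only [LinearMap.smul_apply, hd x y, smul_add, smul_mul_assoc, mul_smul_comm]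

section GroupAlgebra
variable (F : Type*) [Field F] (G : Type*) [Group G]

theorem linear_of_deriv {A : Type*} [Ring A] [Algebra F A] [PerfectField (⊥ : Subfield F)]
    (halg : ∀ x : F, IsAlgebraic (⊥ : Subfield F) x) (d : A → A)
    (hadd : ∀ x y, d (x + y) = d x + d y)
    (hmul : ∀ x y, d (x * y) = d x * y + x * d y) (c : F) (x : A) : d (c • x) = c • d x := by
  have hL : ∀ a b : F, d (algebraMap F A (a * b)) =
      a • d (algebraMap F A b) + b • d (algebraMap F A a) := by
    intro a b
    rw [map_mul, hmul, Algebra.smul_def, Algebra.smul_def, ← Algebra.commutes b, add_comm]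
  have h1 : d 1 = 0 := by
    have := hmul 1 1
    simp only [mul_one, one_mul] at this
    simpa using this
  have h0 : d 0 = 0 := by
    have := hadd 0 0
    simpa using this
  have hneg : ∀ x, d (-x) = - d x := by
    intro x
    have := hadd (-x) x
    rw [neg_add_cancel, h0] at this
    exact eq_neg_of_add_eq_zero_left this.symm
  let S : Subfield F :=
    { carrier := {a | d (algebraMap F A a) = 0}
      zero_mem' := by simp [h0]
      one_mem' := by simp [h1]
      add_mem' := by
        intro a b ha hb
        simp only [Set.mem_ofPred_eq] at *
        rw [map_add, hadd, ha, hb, add_zero]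
      neg_mem' := by
        intro a ha
        simp only [Set.mem_ofPred_eq] at *
        rw [map_neg, hneg, ha, neg_zero]
      mul_mem' := by
        intro a b ha hb
        simp only [Set.mem_ofPred_eq] at *
        rw [hL, ha, hb, smul_zero, smul_zero, add_zero]
      inv_mem' := by
        intro a ha
        simp only [Set.mem_ofPred_eq] at *
        by_cases h : a = 0
        · simp [h, h0]
        have := hL a a⁻¹
        rw [mul_inv_cancel₀ h, map_one, h1, ha, smul_zero, add_zero] at this
        exact (smul_eq_zero.1 this.symm).resolve_left h }
  have hS : ∀ a : (⊥ : Subfield F), d (algebraMap F A a) = 0 := fun a =>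
    (bot_le : (⊥ : Subfield F) ≤ S) a.2
  let D : Derivation (⊥ : Subfield F) F A := Derivation.mk'
    { toFun := fun a => d (algebraMap F A a)
      map_add' := by intro a b; rw [map_add, hadd]
      map_smul' := by
        intro a b
        rw [Subfield.smul_def, smul_eq_mul, hL, hS, smul_zero, add_zero]
        rfl } (by intro a b; exact hL a b)
  have : Algebra.IsAlgebraic (⊥ : Subfield F) F := ⟨halg⟩
  have hsep := Algebra.IsSeparable.isSeparable (⊥ : Subfield F) c
  have hD : D c = 0 := by
    have h2 := D.map_aeval (minpoly (⊥ : Subfield F) c) c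
    rw [minpoly.aeval, map_zero] at h2
    exact (smul_eq_zero.1 h2.symm).resolve_left (hsep.aeval_derivative_ne_zero (minpoly.aeval _ _))
  have hD' : d (algebraMap F A c) = 0 := hD
  rw [Algebra.smul_def, hmul, hD', zero_mul, zero_add, Algebra.smul_def]

/-- The inner derivation map. -/
noncomputable def adMap : MonoidAlgebra F G →ₗ[F] (MonoidAlgebra F G →ₗ[F] MonoidAlgebra F G) :=
  LinearMap.mul F _ - (LinearMap.mul F _).flip

theorem adMap_apply (u x : MonoidAlgebra F G) : adMap F G u x = u * x - x * u := rfl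

theorem range_adMap [Finite G] (hG : (Nat.card G : F) ≠ 0) :
    LinearMap.range (adMap F G) = fDerivations F (MonoidAlgebra F G) := by
  cases nonempty_fintype G
  apply le_antisymm
  · rintro _ ⟨u, rfl⟩ x y
    simp only [adMap_apply]
    noncomm_ring
  · intro d hd
    have hd : ∀ x y, d (x * y) = d x * y + x * d y := hd
    let e : G → MonoidAlgebra F G := MonoidAlgebra.of F G
    have he : ∀ g h, e (g * h) = e g * e h := fun g h => map_mul _ _ _
    have he1 : e 1 = 1 := map_one _
    let s := ∑ g, d (e g) * e g⁻¹
    have key : ∀ h, e h * s = s * e h - (Nat.card G : F) • d (e h) := by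
      intro h
      have h2 : s = ∑ g, d (e (h * g)) * e (h * g)⁻¹ :=
        (Equiv.sum_comp (Equiv.mulLeft h) (fun g => d (e g) * e g⁻¹)).symm
      have h5 : s * e h = ∑ g, d (e (h * g)) * e (h * g)⁻¹ * e h := by rw [h2, Finset.sum_mul]
      have h6 : e h * s = ∑ g, e h * (d (e g) * e g⁻¹) := Finset.mul_sum _ _ _
      rw [h5, h6, Nat.card_eq_fintype_card, Nat.cast_smul_eq_nsmul, ← Finset.card_univ, ← Finset.sum_const,
        ← Finset.sum_sub_distrib]
      refine Finset.sum_congr rfl fun g _ => ?_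
      have h3 : e (h * g)⁻¹ * e h = e g⁻¹ := by rw [← he]; congr 1; group
      have h4 : e g * e g⁻¹ = 1 := by rw [← he, mul_inv_cancel, he1]
      rw [mul_assoc _ _ (e h), h3, he, hd, add_mul, mul_assoc (d (e h)), h4]
      noncomm_ring
    refine ⟨(Nat.card G : F)⁻¹ • s, ?_⟩
    refine LinearMap.ext fun x => ?_
    induction x using MonoidAlgebra.induction_on with
    | of g =>
      change adMap F G _ (e g) = d (e g)
      rw [adMap_apply, smul_mul_assoc, mul_smul_comm, key, ← smul_sub, sub_sub_cancel, smul_smul,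
        inv_mul_cancel₀ hG, one_smul]
    | add x y hx hy => rw [map_add, map_add, hx, hy]
    | smul r x hx => rw [LinearMap.map_smul _ r x, LinearMap.map_smul d r x, hx]

/-- Class functions as elements of the group algebra. -/
noncomputable def classMap [Finite G] : (ConjClasses G → F) →ₗ[F] MonoidAlgebra F G :=
  ((MonoidAlgebra.coeffLinearEquiv F).symm.toLinearMap ∘ₗ
    (Finsupp.linearEquivFunOnFinite F F G).symm.toLinearMap) ∘ₗ
    LinearMap.funLeft F F (ConjClasses.mk : G → ConjClasses G)

theorem classMap_coeff [Finite G] (φ : ConjClasses G → F) (g : G) :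
    (classMap F G φ).coeff g = φ (ConjClasses.mk g) := rfl

theorem ker_adMap [Finite G] : LinearMap.ker (adMap F G) = LinearMap.range (classMap F G) := by
  have hmem : ∀ u, u ∈ LinearMap.ker (adMap F G) ↔
      ∀ g x : G, u.coeff (x * g⁻¹) = u.coeff (g⁻¹ * x) := by
    intro u
    rw [LinearMap.mem_ker]
    constructor
    · intro h g x
      have := congrArg (fun f => (f (MonoidAlgebra.single g 1)).coeff x) h
      simpa [adMap_apply, sub_eq_zero] using this
    · intro h
      refine LinearMap.ext fun x => ?_
      induction x using MonoidAlgebra.induction_on with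
      | of g =>
        ext x
        simp [adMap_apply, sub_eq_zero, h g x]
      | add x y hx hy => rw [map_add, hx, hy]; simp
      | smul r x hx => rw [map_smul, hx]; simp
  ext u
  rw [hmem]
  constructor
  · intro h
    refine ⟨fun c => Quotient.lift u.coeff ?_ c, ?_⟩
    · intro a b hab
      obtain ⟨c, rfl⟩ := isConj_iff.1 hab
      have := h c (c * a)
      simpa using this.symm
    · ext g
      rfl
  · rintro ⟨φ, rfl⟩ g x
    rw [classMap_coeff, classMap_coeff]
    congr 1
    rw [ConjClasses.mk_eq_mk_iff_isConj, isConj_iff]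
    exact ⟨g⁻¹, by group⟩

theorem finrank_fDer [Finite G] (hG : (Nat.card G : F) ≠ 0) :
    Module.finrank F (fDerivations F (MonoidAlgebra F G)) + Nat.card (ConjClasses G)
      = Nat.card G := by
  cases nonempty_fintype G
  have : Finite (ConjClasses G) := Quotient.finite _
  cases nonempty_fintype (ConjClasses G)
  have h := LinearMap.finrank_range_add_finrank_ker (adMap F G)
  have hinj : Function.Injective (classMap F G) := by
    intro φ ψ h
    ext c
    obtain ⟨g, rfl⟩ := ConjClasses.mk_surjective c
    rw [← classMap_coeff F G φ, h, classMap_coeff]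
  rw [range_adMap F G hG, ker_adMap, LinearMap.finrank_range_of_inj hinj,
    (MonoidAlgebra.coeffLinearEquiv F (S := F) (M := G)).finrank_eq] at h
  simpa [Nat.card_eq_fintype_card] using h

theorem perfect_bot (h : CharZero F ∨ ∃ p : ℕ, p.Prime ∧ CharP F p) :
    PerfectField (⊥ : Subfield F) := by
  rcases h with h | ⟨p, hp, h⟩
  · infer_instance
  · have := Fact.mk hp
    have := Subfield.fintypeBot F p
    infer_instance

end GroupAlgebra

section Model

/-- Reduction mod 2. -/
def par (n : ℕ) : ZMod (2 * n) →+* ZMod 2 := ZMod.castHom (Dvd.intro n rfl) (ZMod 2)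

/-- Concrete model of `V_{8n}`: the triple `(i, e, f)` stands for `a^i b^(2e) b^f`. -/
@[ext] structure Mod8 (n : ℕ) where
  i : ZMod (2 * n)
  e : ZMod 2
  f : Bool

namespace Mod8
variable {n : ℕ}

/-- The multiplication of the model. -/
def mul : Mod8 n → Mod8 n → Mod8 n
  | ⟨i, e, false⟩, ⟨j, e', f'⟩ => ⟨i + j, e + e', f'⟩
  | ⟨i, e, true⟩, ⟨j, e', false⟩ => ⟨i - j, e + e' + par n j, true⟩
  | ⟨i, e, true⟩, ⟨j, e', true⟩ => ⟨i - j, e + e' + par n j + 1, false⟩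

/-- The inverse of the model. -/
def inv : Mod8 n → Mod8 n
  | ⟨i, e, false⟩ => ⟨-i, e, false⟩
  | ⟨i, e, true⟩ => ⟨i, e + par n i + 1, true⟩

instance : Mul (Mod8 n) := ⟨mul⟩
instance : Inv (Mod8 n) := ⟨inv⟩
instance : One (Mod8 n) := ⟨⟨0, 0, false⟩⟩

theorem one_def : (1 : Mod8 n) = ⟨0, 0, false⟩ := rfl
theorem mul_f (i j : ZMod (2 * n)) (e e' f') :
  (⟨i, e, false⟩ * ⟨j, e', f'⟩ : Mod8 n) = ⟨i + j, e + e', f'⟩ := rfl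
theorem mul_tf (i j : ZMod (2 * n)) (e e') :
  (⟨i, e, true⟩ * ⟨j, e', false⟩ : Mod8 n) = ⟨i - j, e + e' + par n j, true⟩ := rfl
theorem mul_tt (i j : ZMod (2 * n)) (e e') :
  (⟨i, e, true⟩ * ⟨j, e', true⟩ : Mod8 n) = ⟨i - j, e + e' + par n j + 1, false⟩ := rfl
theorem inv_f (i : ZMod (2 * n)) (e) : (⟨i, e, false⟩⁻¹ : Mod8 n) = ⟨-i, e, false⟩ := rfl
theorem inv_t (i : ZMod (2 * n)) (e) :
  (⟨i, e, true⟩⁻¹ : Mod8 n) = ⟨i, e + par n i + 1, true⟩ := rfl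

instance : Group (Mod8 n) := Group.ofLeftAxioms
  (by
    rintro ⟨i, e, _ | _⟩ ⟨j, e', _ | _⟩ ⟨k, e'', _ | _⟩ <;>
    simp only [mul_f, mul_tf, mul_tt, mk.injEq, map_add, map_sub, CharTwo.sub_eq_add] <;>
    refine ⟨by ring, ?_, trivial⟩ <;> ring_nf <;>
    simp [show (2 : ZMod 2) = 0 from rfl])
  (by rintro ⟨i, e, f⟩; simp [one_def, mul_f])
  (by
    rintro ⟨i, e, _ | _⟩
    · simp [one_def, mul_f, inv_f, CharTwo.add_self_eq_zero]
    · simp only [one_def, mul_tt, inv_t, mk.injEq, sub_self, true_and, and_true]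
      have : e + par n i + 1 + e + par n i + 1 = 2 * (e + par n i + 1) := by ring
      rw [this, show (2 : ZMod 2) = 0 from rfl, zero_mul])

/-- The model as a product type. -/
def equivProd : Mod8 n ≃ ZMod (2 * n) × ZMod 2 × Bool where
  toFun x := (x.i, x.e, x.f)
  invFun p := ⟨p.1, p.2.1, p.2.2⟩
  left_inv _ := rfl
  right_inv _ := rfl

theorem card (hn : 0 < n) : Nat.card (Mod8 n) = 8 * n := by
  rw [Nat.card_congr equivProd]
  simp
  ring

theorem comm_ff (i j : ZMod (2 * n)) (e e') :
    Commute (⟨i, e, false⟩ : Mod8 n) ⟨j, e', false⟩ := by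
  simp only [Commute, SemiconjBy, mul_f, mk.injEq]
  exact ⟨add_comm _ _, add_comm _ _, trivial⟩

theorem comm_ft (i j : ZMod (2 * n)) (e e') :
    Commute (⟨i, e, false⟩ : Mod8 n) ⟨j, e', true⟩ ↔ 2 * i = 0 ∧ par n i = 0 := by
  simp only [Commute, SemiconjBy, mul_f, mul_tf, mk.injEq, and_true]
  rw [add_comm e' e, left_eq_add]
  refine and_congr_left fun _ => ?_
  rw [← sub_eq_zero]
  ring_nf

theorem comm_tf (i j : ZMod (2 * n)) (e e') :
    Commute (⟨i, e, true⟩ : Mod8 n) ⟨j, e', false⟩ ↔ 2 * j = 0 ∧ par n j = 0 := by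
  rw [Commute.symm_iff, comm_ft]

theorem comm_tt (i j : ZMod (2 * n)) (e e') :
    Commute (⟨i, e, true⟩ : Mod8 n) ⟨j, e', true⟩ ↔ 2 * (i - j) = 0 ∧ par n (i - j) = 0 := by
  simp only [Commute, SemiconjBy, mul_tt, mk.injEq, and_true]
  rw [add_comm e' e, add_left_inj, add_right_inj, map_sub, sub_eq_zero, eq_comm (a := par n j)]
  refine and_congr_left fun _ => ?_
  rw [← sub_eq_zero]
  ring_nf

/-- The exceptional elements. -/
def T (n : ℕ) : Set (ZMod (2 * n)) := {i | 2 * i = 0 ∧ par n i = 0}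

theorem par_int (k : ℤ) : par n (k : ZMod (2 * n)) = k := map_intCast _ k

theorem card_T_odd (hn : 0 < n) (h : Odd n) : Nat.card (T n) = 1 := by
  have : T n = {0} := by
    ext t
    obtain ⟨k, rfl⟩ := ZMod.intCast_surjective t
    simp only [T, Set.mem_ofPred_eq, par_int, Set.mem_singleton_iff]
    constructor
    · rintro ⟨h1, h2⟩
      have h1' : ((2 * k : ℤ) : ZMod (2 * n)) = 0 := by push_cast; exact h1
      rw [ZMod.intCast_zmod_eq_zero_iff_dvd] at *
      have h3 : (n : ℤ) ∣ k := by
        obtain ⟨c, hc⟩ := h1'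
        push_cast at hc
        exact ⟨c, by linarith⟩
      push_cast
      have : IsCoprime (2 : ℤ) n := by
        rw [Int.isCoprime_iff_gcd_eq_one]
        exact_mod_cast (Nat.coprime_two_left.2 h)
      exact this.mul_dvd (by exact_mod_cast h2) h3
    · intro h
      rw [← par_int, h]
      simp
  rw [this]
  simp

theorem card_T_even (hn : 0 < n) (h : Even n) : Nat.card (T n) = 2 := by
  have : T n = {0, (n : ZMod (2 * n))} := by
    ext t
    obtain ⟨k, rfl⟩ := ZMod.intCast_surjective t
    simp only [T, Set.mem_ofPred_eq, par_int, Set.mem_singleton_iff, Set.mem_insert_iff]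
    constructor
    · rintro ⟨h1, h2⟩
      have h1' : ((2 * k : ℤ) : ZMod (2 * n)) = 0 := by push_cast; exact h1
      rw [ZMod.intCast_zmod_eq_zero_iff_dvd] at h1'
      obtain ⟨c, hc⟩ := h1'
      push_cast at hc
      have hk : k = n * c := by linarith
      obtain ⟨m, rfl | rfl⟩ := Int.even_or_odd' c
      · left
        rw [ZMod.intCast_zmod_eq_zero_iff_dvd]
        exact ⟨m, by push_cast; rw [hk]; ring⟩
      · right
        rw [← sub_eq_zero]
        have : ((k - n : ℤ) : ZMod (2 * n)) = 0 := by
          rw [ZMod.intCast_zmod_eq_zero_iff_dvd]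
          exact ⟨m, by push_cast; rw [hk]; ring⟩
        exact_mod_cast this
    · rintro (h' | h')
      · rw [← par_int, h']
        simp
      · rw [← par_int, h', map_natCast]
        refine ⟨by exact_mod_cast ZMod.natCast_self (2 * n), ?_⟩
        rw [ZMod.natCast_eq_zero_iff]
        exact h.two_dvd
  rw [this]
  have hne : (0 : ZMod (2 * n)) ≠ n := by
    intro h0
    rw [eq_comm, ZMod.natCast_eq_zero_iff] at h0
    have := Nat.le_of_dvd hn h0
    omega
  rw [Nat.card_coe_set_eq, Set.ncard_pair hne]

theorem card_comm (hn : 0 < n) :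
    Nat.card {p : Mod8 n × Mod8 n // Commute p.1 p.2}
      = (2 * n + 3 * Nat.card (T n)) * (8 * n) := by
  classical
  have : NeZero (2 * n) := ⟨by omega⟩
  have : Fintype (Mod8 n) := Fintype.ofEquiv _ equivProd.symm
  have hsum : ∀ P : ZMod (2 * n) × ZMod 2 × Bool → ℕ, ∑ p, P p
      = ∑ i, ∑ e, (P (i, e, false) + P (i, e, true)) := by
    intro P
    simp only [Fintype.sum_prod_type, Fintype.sum_bool, add_comm]
  have hT : Nat.card (T n) = ∑ i : ZMod (2 * n), if i ∈ T n then 1 else 0 := by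
    rw [Nat.card_eq_fintype_card, Fintype.card_subtype, Finset.card_filter]
  have hT2 : ∀ i, (∑ j : ZMod (2 * n), if i - j ∈ T n then 1 else 0) = Nat.card (T n) := by
    intro i
    rw [hT]
    exact (Equiv.subLeft i).sum_comp (fun j => if j ∈ T n then 1 else 0)
  have cft : ∀ (i j : ZMod (2 * n)) (e e'),
    Commute (⟨i, e, false⟩ : Mod8 n) ⟨j, e', true⟩ ↔ i ∈ T n := comm_ft
  have ctf : ∀ (i j : ZMod (2 * n)) (e e'),
    Commute (⟨i, e, true⟩ : Mod8 n) ⟨j, e', false⟩ ↔ j ∈ T n := comm_tf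
  have ctt : ∀ (i j : ZMod (2 * n)) (e e'),
    Commute (⟨i, e, true⟩ : Mod8 n) ⟨j, e', true⟩ ↔ i - j ∈ T n := comm_tt
  rw [Nat.card_eq_fintype_card, Fintype.card_subtype, Finset.card_filter, Fintype.sum_prod_type]
  dsimp only
  rw [← equivProd.symm.sum_comp, hsum]
  simp_rw [← equivProd.symm.sum_comp (fun y => ite (Commute _ y) 1 0), hsum]
  simp only [equivProd, Equiv.coe_fn_symm_mk, cft, ctf, ctt, comm_ff, if_true,
    Finset.sum_add_distrib, Finset.sum_const, Finset.card_univ, ZMod.card, smul_eq_mul,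
    ← Finset.mul_sum, ← Finset.sum_mul, ← hT, hT2]
  ring

end Mod8

section Iso
variable {n : ℕ}

/-- images of generators -/
def genM (n : ℕ) : Fin 2 → Mod8 n := ![⟨1, 0, false⟩, ⟨0, 0, true⟩]

theorem apow (k : ℕ) : (⟨1, 0, false⟩ : Mod8 n) ^ k = ⟨k, 0, false⟩ := by
  induction k with
  | zero => simp [Mod8.one_def]
  | succ k ih => rw [pow_succ, ih, Mod8.mul_f]; simp

theorem relsM : ∀ r ∈ V8nRels n, FreeGroup.lift (genM n) r = 1 := by
  intro r hr
  have h2 : (1 : ZMod 2) + 1 = 0 := rfl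
  rcases hr with rfl | rfl | rfl | rfl
  · simp only [map_pow, FreeGroup.lift_apply_of, genM, Matrix.cons_val_zero, apow]
    rw [Mod8.one_def, ZMod.natCast_self]
  · simp [genM, pow_succ, Mod8.mul_tt, Mod8.mul_f, Mod8.mul_tf, Mod8.one_def, h2]
  · simp [genM, pow_succ, Mod8.mul_tt, Mod8.mul_f, Mod8.mul_tf, Mod8.one_def, h2]
  · simp [genM, pow_succ, Mod8.mul_tt, Mod8.mul_f, Mod8.mul_tf, Mod8.one_def, Mod8.inv_t, h2]

/-- The map to the model. -/
def toM (n : ℕ) : V8n n →* Mod8 n := PresentedGroup.toGroup relsM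

theorem rel1 : aV n ^ (2 * n) = 1 :=
  PresentedGroup.one_of_mem (rels := V8nRels n) (Or.inl rfl)
theorem rel2 : bV n ^ 4 = 1 :=
  PresentedGroup.one_of_mem (rels := V8nRels n) (Or.inr (Or.inl rfl))
theorem rel3 : (bV n * aV n) ^ 2 = 1 :=
  PresentedGroup.one_of_mem (rels := V8nRels n) (Or.inr (Or.inr (Or.inl rfl)))
theorem rel4 : ((bV n)⁻¹ * aV n) ^ 2 = 1 :=
  PresentedGroup.one_of_mem (rels := V8nRels n) (Or.inr (Or.inr (Or.inr rfl)))

theorem zcomm : bV n ^ 2 * aV n = aV n * bV n ^ 2 := by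
  have h2 := rel2 (n := n)
  have h3 := rel3 (n := n)
  have h4 := rel4 (n := n)
  generalize aV n = a at *
  generalize bV n = b at *
  have e1 : b * a = a⁻¹ * b⁻¹ := by
    rw [pow_two] at h3
    rw [eq_comm, ← mul_inv_rev]; exact inv_eq_of_mul_eq_one_left h3
  have e2 : a * b⁻¹ = b * a⁻¹ := by
    rw [pow_two] at h4
    have : b⁻¹ * a = a⁻¹ * b := by
      rw [eq_comm]
      simpa using inv_eq_of_mul_eq_one_left h4
    calc a * b⁻¹ = a * (b⁻¹ * a) * a⁻¹ := by group
      _ = _ := by rw [this]; group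
  have e3 : (b ^ 2)⁻¹ = b ^ 2 := inv_eq_of_mul_eq_one_left (by rw [← pow_add]; exact h2)
  calc b ^ 2 * a = b * (b * a) := by rw [pow_two, mul_assoc]
    _ = (b * a⁻¹) * b⁻¹ := by rw [e1]; group
    _ = a * (b ^ 2)⁻¹ := by rw [← e2]; group
    _ = _ := by rw [e3]

theorem bab : bV n * aV n * (bV n)⁻¹ = (aV n)⁻¹ * bV n ^ 2 := by
  have h2 := rel2 (n := n)
  have h3 := rel3 (n := n)
  generalize aV n = a at *
  generalize bV n = b at *
  have e1 : b * a = a⁻¹ * b⁻¹ := by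
    rw [pow_two] at h3
    rw [eq_comm, ← mul_inv_rev]; exact inv_eq_of_mul_eq_one_left h3
  have e3 : (b ^ 2)⁻¹ = b ^ 2 := inv_eq_of_mul_eq_one_left (by rw [← pow_add]; exact h2)
  rw [e1, ← e3]; group

theorem bak (k : ℤ) : bV n * aV n ^ k = (aV n) ^ (-k) * (bV n ^ 2) ^ k * bV n := by
  have hc : Commute (bV n ^ 2) (aV n) := zcomm
  rw [← mul_inv_eq_iff_eq_mul, ← conj_zpow, bab, hc.symm.inv_left.mul_zpow, zpow_neg, inv_zpow]

theorem azpow_congr {k l : ℤ} (h : (k : ZMod (2 * n)) = l) : aV n ^ k = aV n ^ l := by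
  rw [ZMod.intCast_eq_intCast_iff_dvd_sub] at h
  obtain ⟨c, hc⟩ := h
  have : l = k + (2 * n : ℕ) * c := by linarith
  rw [this, zpow_add, zpow_mul, zpow_natCast, rel1, one_zpow, mul_one]

theorem zzpow_congr {k l : ℤ} (h : (k : ZMod 2) = l) : (bV n ^ 2) ^ k = (bV n ^ 2) ^ l := by
  rw [ZMod.intCast_eq_intCast_iff_dvd_sub] at h
  obtain ⟨c, hc⟩ := h
  have : l = k + (2 : ℕ) * c := by linarith
  rw [this, zpow_add, zpow_mul, zpow_natCast, ← pow_mul, rel2, one_zpow, mul_one]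

/-- The map from the model. -/
noncomputable def ofMfun (x : Mod8 n) : V8n n :=
  aV n ^ (x.i.cast : ℤ) * (bV n ^ 2) ^ (x.e.cast : ℤ) * (if x.f then bV n else 1)

theorem ofMfun_eq (i e : ℤ) (f : Bool) : ofMfun (n := n) ⟨i, e, f⟩ =
    aV n ^ i * (bV n ^ 2) ^ e * (if f then bV n else 1) := by
  unfold ofMfun
  rw [azpow_congr (ZMod.intCast_zmod_cast _), zzpow_congr (ZMod.intCast_zmod_cast _)]

theorem ofMfun_mul (x y : Mod8 n) : ofMfun (x * y) = ofMfun x * ofMfun y := by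
  have hza : ∀ k l : ℤ, (bV n ^ 2) ^ k * aV n ^ l = aV n ^ l * (bV n ^ 2) ^ k := fun k l =>
    (Commute.zpow_zpow (show Commute (bV n ^ 2) (aV n) from zcomm) k l)
  have hzb : ∀ k : ℤ, bV n * (bV n ^ 2) ^ k = (bV n ^ 2) ^ k * bV n := fun k =>
    (((Commute.refl (bV n)).pow_right 2).zpow_right k)
  obtain ⟨i, e, f⟩ := x
  obtain ⟨j, e', f'⟩ := y
  obtain ⟨i, rfl⟩ := ZMod.intCast_surjective i
  obtain ⟨j, rfl⟩ := ZMod.intCast_surjective j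
  obtain ⟨e, rfl⟩ := ZMod.intCast_surjective e
  obtain ⟨e', rfl⟩ := ZMod.intCast_surjective e'
  have hb : bV n * aV n ^ j = aV n ^ (-j) * (bV n ^ 2) ^ j * bV n := bak j
  rcases f with _ | _
  · rw [Mod8.mul_f]
    have := ofMfun_eq (n := n) (i + j) (e + e') f'
    push_cast at this
    rw [this, ofMfun_eq, ofMfun_eq, zpow_add, zpow_add]
    simp only [Bool.false_eq_true, if_false, mul_one]
    have h := hza e j
    generalize (bV n ^ 2) ^ e = z at *
    simp only [mul_assoc]
    rw [← mul_assoc z (aV n ^ j), h]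
    simp only [mul_assoc]
  · have key : aV n ^ i * (bV n ^ 2) ^ e * bV n * (aV n ^ j * (bV n ^ 2) ^ e') =
        aV n ^ (i - j) * (bV n ^ 2) ^ (e + e' + j) * bV n := by
      calc _ = aV n ^ i * (bV n ^ 2) ^ e * (bV n * aV n ^ j) * (bV n ^ 2) ^ e' := by
            simp only [mul_assoc]
        _ = aV n ^ i * ((bV n ^ 2) ^ e * aV n ^ (-j)) * (bV n ^ 2) ^ j *
              (bV n * (bV n ^ 2) ^ e') := by
            rw [hb]; simp only [mul_assoc]
        _ = (aV n ^ i * aV n ^ (-j)) * ((bV n ^ 2) ^ e * (bV n ^ 2) ^ j * (bV n ^ 2) ^ e') *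
              bV n := by
            rw [hza, hzb]; simp only [mul_assoc]
        _ = _ := by
            rw [← zpow_add, ← zpow_add, ← zpow_add, ← sub_eq_add_neg, add_right_comm e j e']
    rcases f' with _ | _
    · rw [Mod8.mul_tf]
      have := ofMfun_eq (n := n) (i - j) (e + e' + j) true
      push_cast at this
      rw [Mod8.par_int, this, ofMfun_eq, ofMfun_eq]
      simp only [Bool.false_eq_true, if_false, mul_one, if_true]
      exact key.symm
    · rw [Mod8.mul_tt]
      have := ofMfun_eq (n := n) (i - j) (e + e' + j + 1) false
      push_cast at this
      rw [Mod8.par_int, this, ofMfun_eq, ofMfun_eq]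
      simp only [Bool.false_eq_true, if_false, mul_one, if_true]
      rw [← mul_assoc _ _ (bV n), key, zpow_add_one, pow_two]
      simp only [mul_assoc]

/-- The homomorphism from the model. -/
noncomputable def ofM (n : ℕ) : Mod8 n →* V8n n := MonoidHom.mk' ofMfun ofMfun_mul

theorem ofM_toM (x : V8n n) : ofM n (toM n x) = x := by
  have : (ofM n).comp (toM n) = MonoidHom.id _ := by
    apply PresentedGroup.ext
    intro k
    simp only [MonoidHom.comp_apply, toM, PresentedGroup.toGroup.of, MonoidHom.id_apply]
    change ofMfun _ = _
    fin_cases k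
    · have := ofMfun_eq (n := n) 1 0 false
      simpa [genM, aV, bV] using this
    · have := ofMfun_eq (n := n) 0 0 true
      simpa [genM, aV, bV] using this
  exact DFunLike.congr_fun this x

theorem toM_surj : Function.Surjective (toM n) := by
  have ha : toM n (aV n) = ⟨1, 0, false⟩ := PresentedGroup.toGroup.of relsM
  have hb : toM n (bV n) = ⟨0, 0, true⟩ := PresentedGroup.toGroup.of relsM
  have hz : (⟨0, 0, true⟩ : Mod8 n) ^ 2 = ⟨0, 1, false⟩ := by
    rw [pow_two, Mod8.mul_tt]; simp
  have hz' : ∀ k : ℕ, (⟨0, 1, false⟩ : Mod8 n) ^ k = ⟨0, k, false⟩ := by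
    intro k
    induction k with
    | zero => simp [Mod8.one_def]
    | succ k ih => rw [pow_succ, ih, Mod8.mul_f]; simp
  have ha' : ∀ k : ℤ, (⟨1, 0, false⟩ : Mod8 n) ^ k = ⟨k, 0, false⟩ := by
    intro k
    obtain ⟨m, rfl | rfl⟩ := k.eq_nat_or_neg
    · rw [zpow_natCast, apow]; simp
    · rw [zpow_neg, zpow_natCast, apow, Mod8.inv_f]; simp
  rintro ⟨i, e, f⟩
  obtain ⟨i, rfl⟩ := ZMod.intCast_surjective i
  obtain ⟨e, rfl⟩ := ZMod.natCast_zmod_surjective e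
  refine ⟨aV n ^ i * (bV n ^ 2) ^ e * (if f then bV n else 1), ?_⟩
  rw [map_mul, map_mul, map_zpow, map_pow, map_pow, ha, hb, hz, hz', ha']
  cases f
  · simp [Mod8.mul_f]
  · simp [Mod8.mul_f, hb]

/-- The isomorphism. -/
noncomputable def isoM (n : ℕ) : V8n n ≃* Mod8 n :=
  MulEquiv.ofBijective (toM n) ⟨Function.LeftInverse.injective ofM_toM, toM_surj⟩

theorem card_V8n (hn : 0 < n) : Nat.card (V8n n) = 8 * n := by
  rw [Nat.card_congr (isoM n).toEquiv, Mod8.card hn]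

theorem card_conj_V8n (hn : 0 < n) :
    Nat.card (ConjClasses (V8n n)) = 2 * n + 3 * Nat.card (Mod8.T n) := by
  have h := card_comm_eq_card_conjClasses_mul_card (V8n n)
  have h2 : Nat.card {p : V8n n × V8n n // Commute p.1 p.2} =
      Nat.card {p : Mod8 n × Mod8 n // Commute p.1 p.2} := by
    refine Nat.card_congr (Equiv.subtypeEquiv
      ((isoM n).toEquiv.prodCongr (isoM n).toEquiv) ?_)
    rintro ⟨x, y⟩
    exact (commute_map_iff (isoM n).injective).symm
  rw [h2, Mod8.card_comm hn, card_V8n hn] at h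
  exact (Nat.eq_of_mul_eq_mul_right (by omega) h).symm

end Iso
end Model

/-- Let `F` be an algebraic extension of a prime field whose
characteristic is `0` or an odd prime `p` with `gcd(n, p) = 1`. Then every derivation
of `F V_{8n}` is `F`-linear, and the `F`-vector space of all derivations of
`F V_{8n}` (equivalently, of all `F`-linear derivations) has dimension `6(n-1)` over
`F` when `n` is even, and `3(2n-1)` when `n` is odd. -/
theorem dim_derivations_V8n (n : ℕ) (hn : 0 < n) (F : Type*) [Field F]
    (halg : ∀ x : F, IsAlgebraic (⊥ : Subfield F) x)
    (hchar : CharZero F ∨ ∃ p : ℕ, p.Prime ∧ Odd p ∧ Nat.gcd n p = 1 ∧ CharP F p) :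
    (∀ d : MonoidAlgebra F (V8n n) → MonoidAlgebra F (V8n n),
      (∀ x y, d (x + y) = d x + d y) →
      (∀ x y, d (x * y) = d x * y + x * d y) →
      ∀ (c : F) (x : MonoidAlgebra F (V8n n)), d (c • x) = c • d x) ∧
    (Even n →
      Module.finrank F (fDerivations F (MonoidAlgebra F (V8n n))) = 6 * (n - 1)) ∧
    (Odd n →
      Module.finrank F (fDerivations F (MonoidAlgebra F (V8n n))) = 3 * (2 * n - 1)) := by
  have : Finite (V8n n) := Nat.finite_of_card_ne_zero (by rw [card_V8n hn]; omega)
  have hcard : (Nat.card (V8n n) : F) ≠ 0 := by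
    rw [card_V8n hn]
    rcases hchar with h | ⟨p, hp, hodd, hg, h⟩
    · exact_mod_cast (by omega : 8 * n ≠ 0)
    · rw [Ne, CharP.cast_eq_zero_iff F p, hp.dvd_mul]
      rintro (h8 | h8)
      · have : p ∣ 2 := hp.dvd_of_dvd_pow (show p ∣ 2 ^ 3 by norm_num; exact h8)
        rw [Nat.prime_dvd_prime_iff_eq hp Nat.prime_two] at this
        subst this
        exact absurd hodd (by decide)
      · have := Nat.dvd_gcd h8 dvd_rfl
        rw [hg] at this
        exact hp.one_lt.ne' (Nat.dvd_one.1 this)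
  have hfin := finrank_fDer F (V8n n) hcard
  rw [card_V8n hn, card_conj_V8n hn] at hfin
  have := perfect_bot F (hchar.imp id fun ⟨p, hp, _, _, h⟩ => ⟨p, hp, h⟩)
  refine ⟨fun d h1 h2 => linear_of_deriv F halg d h1 h2, fun he => ?_, fun ho => ?_⟩
  · rw [Mod8.card_T_even hn he] at hfin
    omega
  · rw [Mod8.card_T_odd hn ho] at hfin
    omega
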